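/- arXiv:2405.11428 — 3 statements merged into one kernel-verified Lean document; each statement's English description precedes it below -/
import Mathlib

section
/- The function t ↦ Σ_{n∈ℤ} t/(1 + t⁴n⁴), defined for t > 0, attains its minimum value at t = √2; that is, for every t > 0, Σ_{n∈ℤ} t/(1 + t⁴n⁴) ≥ Σ_{n∈ℤ} √2/(1 + 4n⁴). -/
/-!
Put `G x = (sinh x + sin x) / (cosh x - cos x)`. Taking real parts in the Mittag-Leffler expansion
of `π z cot (π z)` on the diagonal `z = b (1 + i)`, where `z² = 2b²i`, turns the sum over `n` into
`π / √2 * G (√2 π / t)`, and `t = √2` corresponds to the argument `π`. Since `G' x` equals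
`-2 sinh x sin x / (cosh x - cos x)²`, `G` falls on `(0, π]` and rises on `[π, 2π]`; beyond `2π`
the hyperbolic terms dominate and `G` stays above `G π`.
-/

section MittagLeffler

open Complex
open scoped ComplexConjugate Real

theorem hasSum_int_sq_div_sq_sub_sq {z : ℂ} (hz : z ∈ integerComplement) :
    HasSum (fun n : ℤ ↦ z ^ 2 / (z ^ 2 - n ^ 2)) (π * z * cot (π * z)) := by
  have hz0 : z ≠ 0 := integerComplement.ne_zero hz
  have hcot : HasSum (cotTerm z) (π * cot (π * z) - 1 / z) :=
    (summable_cotTerm hz).hasSum_iff_tendsto_nat.mpr (tendsto_logDeriv_euler_cot_sub hz)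
  have hterm (n : ℕ) : z / 2 * cotTerm z n = z ^ 2 / (z ^ 2 - (n + 1) ^ 2) := by
    rw [cotTerm_identity hz, ← sq_sub_sq]
    ring
  have hhalf : HasSum (fun n : ℕ ↦ z ^ 2 / (z ^ 2 - (n + 1) ^ 2))
      (z / 2 * (π * cot (π * z) - 1 / z)) := by
    simpa only [hterm] using hcot.mul_left (z / 2)
  convert HasSum.of_add_one_of_neg_add_one (f := fun n : ℤ ↦ z ^ 2 / (z ^ 2 - (n : ℂ) ^ 2))
    (by simpa using hhalf) (by simpa [← neg_add_rev, -neg_add_rev] using hhalf) using 1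
  simp only [Int.cast_zero]
  field_simp
  ring

theorem cot_ofReal_add_ofReal_mul_I (x y : ℝ) :
    cot (x + y * I) = (Real.sin (2 * x) - Real.sinh (2 * y) * I : ℂ) /
      (Real.cosh (2 * y) - Real.cos (2 * x) : ℝ) := by
  set w : ℂ := x + y * I
  have hadd : w + conj w = (2 * x : ℝ) := by
    rw [add_conj]
    simp [w]
  have hsub : w - conj w = (2 * y : ℝ) * I := by
    rw [sub_conj]
    simp [w]
  have hnum : 2 * (cos w * sin (conj w)) = Real.sin (2 * x) - Real.sinh (2 * y) * I := by
    rw [ofReal_sin, ofReal_sinh, ← sin_mul_I, ← hadd, ← hsub, sin_add, sin_sub]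
    ring
  have hden : 2 * (sin w * sin (conj w)) = (Real.cosh (2 * y) - Real.cos (2 * x) : ℝ) := by
    rw [ofReal_sub, ofReal_cosh, ofReal_cos, ← cos_mul_I, ← hadd, ← hsub, cos_add, cos_sub]
    ring
  rw [← hnum, ← hden, mul_div_mul_left _ _ two_ne_zero, cot_eq_cos_div_sin]
  rcases eq_or_ne (sin w) 0 with hw | hw
  · simp [hw]
  · have hw' : sin (conj w) ≠ 0 := by rwa [sin_conj, map_ne_zero]
    rw [mul_div_mul_right _ _ hw']

theorem re_mul_I_div_mul_I_sub (a m : ℝ) : (a * I / (a * I - m)).re = a ^ 2 / (a ^ 2 + m ^ 2) := by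
  simp [div_re, normSq_apply, sq, add_comm]

end MittagLeffler

/-- The real part of `(1 + i) cot (x (1 + i) / 2)`, in which the closed form of
`∑ n, t / (1 + t⁴n⁴)` is expressed. It takes the junk value `0` at `x = 0`. -/
noncomputable def sinhSinRatio (x : ℝ) : ℝ :=
  (Real.sinh x + Real.sin x) / (Real.cosh x - Real.cos x)

section ClosedForm

open Complex
open scoped Real

theorem re_one_add_I_mul_cot (u : ℝ) :
    ((1 + I) * cot (u + u * I)).re = sinhSinRatio (2 * u) := by
  rw [cot_ofReal_add_ofReal_mul_I, ← mul_div_assoc, div_ofReal_re, sinhSinRatio]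
  simp [-ofReal_sin, -ofReal_sinh, add_comm]

theorem hasSum_int_four_mul_pow_four_div {b : ℝ} (hb : b ≠ 0) :
    HasSum (fun n : ℤ ↦ 4 * b ^ 4 / (4 * b ^ 4 + (n : ℝ) ^ 4))
      (π * b * sinhSinRatio (2 * (π * b))) := by
  set z : ℂ := b * (1 + I) with hz
  have hz_compl : z ∈ integerComplement := by
    rintro ⟨n, hn⟩
    have him := congrArg im hn
    simp [z, hb.symm] at him
  have hz_sq : z ^ 2 = (2 * b ^ 2 : ℝ) * I := by
    rw [hz]
    push_cast
    linear_combination (b : ℂ) ^ 2 * I_sq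
  have hterm (n : ℤ) : (z ^ 2 / (z ^ 2 - n ^ 2)).re = 4 * b ^ 4 / (4 * b ^ 4 + (n : ℝ) ^ 4) := by
    have h := re_mul_I_div_mul_I_sub (2 * b ^ 2) ((n : ℝ) ^ 2)
    rw [hz_sq]
    push_cast at h ⊢
    rw [h]
    ring
  have hvalue : (π * z * cot (π * z)).re = π * b * sinhSinRatio (2 * (π * b)) := by
    have hpz : (π * z : ℂ) = (π * b : ℝ) + (π * b : ℝ) * I := by
      rw [hz]
      push_cast
      ring
    rw [← re_one_add_I_mul_cot, ← re_ofReal_mul, ← hpz, hz]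
    push_cast
    ring_nf
  simpa only [hterm, hvalue] using hasSum_re (hasSum_int_sq_div_sq_sub_sq hz_compl)

theorem sqrt_two_pow_four : √2 ^ 4 = 4 := by
  rw [show √2 ^ 4 = (√2 ^ 2) ^ 2 by ring, Real.sq_sqrt zero_le_two]
  norm_num

theorem hasSum_int_div_one_add_pow_four {t : ℝ} (ht : t ≠ 0) :
    HasSum (fun n : ℤ ↦ t / (1 + t ^ 4 * (n : ℝ) ^ 4))
      (π / √2 * sinhSinRatio (√2 * π / t)) := by
  have hb : 4 * (√2 / (2 * t)) ^ 4 = 1 / t ^ 4 := by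
    rw [div_pow, sqrt_two_pow_four]
    field_simp
    norm_num
  have hterm (n : ℤ) : t * (4 * (√2 / (2 * t)) ^ 4 / (4 * (√2 / (2 * t)) ^ 4 + (n : ℝ) ^ 4)) =
      t / (1 + t ^ 4 * (n : ℝ) ^ 4) := by
    rw [hb]
    field_simp
  have harg : 2 * (π * (√2 / (2 * t))) = √2 * π / t := by field_simp
  have hcoeff : t * (π * (√2 / (2 * t))) = π / √2 := by
    field_simp
    exact Real.sq_sqrt zero_le_two
  have hvalue : t * (π * (√2 / (2 * t)) * sinhSinRatio (2 * (π * (√2 / (2 * t))))) =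
      π / √2 * sinhSinRatio (√2 * π / t) := by
    rw [harg, ← mul_assoc, hcoeff]
  simpa only [hterm, hvalue] using
    (hasSum_int_four_mul_pow_four_div (b := √2 / (2 * t)) (by positivity)).mul_left t

end ClosedForm

section Minimum

open Real Set

theorem cosh_sub_cos_pos {x : ℝ} (hx : x ≠ 0) : 0 < cosh x - cos x :=
  sub_pos.mpr ((cos_le_one x).trans_lt (one_lt_cosh.mpr hx))

theorem hasDerivAt_sinhSinRatio {x : ℝ} (hx : x ≠ 0) :
    HasDerivAt sinhSinRatio (-2 * sinh x * sin x / (cosh x - cos x) ^ 2) x := by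
  refine (((hasDerivAt_sinh x).add (hasDerivAt_sin x)).div
    ((hasDerivAt_cosh x).sub (hasDerivAt_cos x)) (cosh_sub_cos_pos hx).ne').congr_deriv ?_
  congr 1
  simp only [Pi.add_apply, Pi.sub_apply]
  linear_combination cosh_sq_sub_sinh_sq x - sin_sq_add_cos_sq x

theorem continuousOn_sinhSinRatio : ContinuousOn sinhSinRatio {0}ᶜ :=
  fun _ hx ↦ (hasDerivAt_sinhSinRatio hx).continuousAt.continuousWithinAt

theorem antitoneOn_sinhSinRatio : AntitoneOn sinhSinRatio (Ioc 0 π) := by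
  refine antitoneOn_of_hasDerivWithinAt_nonpos (convex_Ioc 0 π)
    (continuousOn_sinhSinRatio.mono fun x hx ↦ hx.1.ne')
    (fun x hx ↦ (hasDerivAt_sinhSinRatio (interior_subset hx).1.ne').hasDerivWithinAt)
    fun x hx ↦ ?_
  obtain ⟨hx0, hxπ⟩ := interior_subset hx
  have hsinh : 0 ≤ sinh x := sinh_nonneg_iff.mpr hx0.le
  have hsin : 0 ≤ sin x := sin_nonneg_of_nonneg_of_le_pi hx0.le hxπ
  exact div_nonpos_of_nonpos_of_nonneg (by nlinarith) (sq_nonneg _)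

theorem monotoneOn_sinhSinRatio : MonotoneOn sinhSinRatio (Icc π (2 * π)) := by
  have hpos {x : ℝ} (hx : x ∈ Icc π (2 * π)) : 0 < x := pi_pos.trans_le hx.1
  refine monotoneOn_of_hasDerivWithinAt_nonneg (convex_Icc π (2 * π))
    (continuousOn_sinhSinRatio.mono fun x hx ↦ (hpos hx).ne')
    (fun x hx ↦ (hasDerivAt_sinhSinRatio (hpos (interior_subset hx)).ne').hasDerivWithinAt)
    fun x hx ↦ ?_
  have hx' := interior_subset hx
  have hsinh : 0 ≤ sinh x := sinh_nonneg_iff.mpr (hpos hx').le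
  have hsin : 0 ≤ sin (x - π) :=
    sin_nonneg_of_nonneg_of_le_pi (by linarith [hx'.1]) (by linarith [hx'.2])
  rw [sin_sub_pi] at hsin
  exact div_nonneg (by nlinarith) (sq_nonneg _)

theorem sinhSinRatio_pi_le_of_two_pi_le {x : ℝ} (hx : 2 * π ≤ x) :
    sinhSinRatio π ≤ sinhSinRatio x := by
  have hπ : 3 < π := pi_gt_three
  have hsinh_pi : 3 < sinh π := hπ.trans (self_lt_sinh_iff.mpr pi_pos)
  have hsinh_lt_cosh : sinh π < cosh π := sinh_lt_cosh π
  have hdominant : sinh π + cosh π + 1 ≤ sinh x := calc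
    sinh π + cosh π + 1 ≤ 2 * sinh π * cosh π := by nlinarith
    _ = sinh (2 * π) := (sinh_two_mul π).symm
    _ ≤ sinh x := sinh_le_sinh.mpr hx
  have hsinh_sub : 0 ≤ sinh x * cosh π - cosh x * sinh π :=
    sinh_sub x π ▸ sinh_nonneg_iff.mpr (by linarith)
  have hsin : -(cosh π + 1) ≤ (cosh π + 1) * sin x := by nlinarith [neg_one_le_sin x]
  have hcos : -sinh π ≤ sinh π * cos x := by nlinarith [neg_one_le_cos x]
  rw [sinhSinRatio, sinhSinRatio, div_le_div_iff₀ (cosh_sub_cos_pos pi_ne_zero)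
    (cosh_sub_cos_pos (by linarith)), sin_pi, cos_pi]
  linarith

theorem sinhSinRatio_pi_le {x : ℝ} (hx : 0 < x) : sinhSinRatio π ≤ sinhSinRatio x := by
  have hπ : 0 < π := pi_pos
  rcases le_total x π with hxπ | hπx
  · exact antitoneOn_sinhSinRatio ⟨hx, hxπ⟩ ⟨hπ, le_rfl⟩ hxπ
  rcases le_total x (2 * π) with hx_mid | hx_large
  · exact monotoneOn_sinhSinRatio ⟨le_rfl, by linarith⟩ ⟨hπx, hx_mid⟩ hπx
  · exact sinhSinRatio_pi_le_of_two_pi_le hx_large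

end Minimum

/-- The function `t ↦ Σ_{n∈ℤ} t/(1 + t⁴n⁴)` on `t > 0` attains its minimum at `t = √2`. -/
theorem statement5 (t : ℝ) (ht : 0 < t) :
    (∑' n : ℤ, Real.sqrt 2 / (1 + 4 * (n : ℝ) ^ 4))
      ≤ ∑' n : ℤ, t / (1 + t ^ 4 * (n : ℝ) ^ 4) := by
  have hsqrt : 0 < √2 := Real.sqrt_pos.mpr two_pos
  have hmin : ∑' n : ℤ, √2 / (1 + 4 * (n : ℝ) ^ 4) =
      Real.pi / √2 * sinhSinRatio Real.pi := by
    simpa only [sqrt_two_pow_four, mul_div_cancel_left₀ _ hsqrt.ne'] using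
      (hasSum_int_div_one_add_pow_four hsqrt.ne').tsum_eq
  have hle : sinhSinRatio Real.pi ≤ sinhSinRatio (√2 * Real.pi / t) :=
    sinhSinRatio_pi_le (by positivity)
  rw [hmin, (hasSum_int_div_one_add_pow_four ht.ne').tsum_eq]
  gcongr
end

section
/- Let α ≥ 12 be an even integer and let s_α > 0 be a minimizer of t ↦ Σ_{n∈ℤ} t·f_α(t n) over t > 0. Then |s_α^α − (α − 2 + √((α−2)² − 3))| ≤ (2α/0.99²)·(α+1)²/(2^{α−1}(α−1)). -/
/-- The lattice energy `t ↦ Σ_{n∈ℤ} t·f_α(t n)` with `f_α(x) = 1/(1+x^α)`. -/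
noncomputable def latticeEnergy (α : ℕ) (t : ℝ) : ℝ :=
  ∑' n : ℤ, t * (1 / (1 + (t * (n : ℝ)) ^ α))

/-!
The derivative of `x ↦ x f_α(x)` is `D(x) = (1 - (α - 1) x^α) / (1 + x^α)²`, so at a local minimum
`s` of the energy the sum of `D(s n)` over all integers `n` vanishes. With `u = s^α`, the terms
`n = 0, ±1` contribute `1 + 2 D(s) = (u² - 2 (α - 2) u + 3) / (1 + u)²`, whose numerator has the
roots `α - 2 ± √((α - 2)² - 3)`, and the terms with `|n| ≥ 2` contribute `O(α 2^{-α} / u)`. When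
`u ≥ 1`, this makes the numerator `O(α 2^{-α} u)`, while `u` keeps a distance of at least `u / 2`
from the smaller root; hence `u` is within `O(α 2^{-α})` of the larger one.

That a global minimizer satisfies `s > 1` follows by comparison with `t = 1.28`. For small `s` the
energy is a Riemann sum of a decreasing function, so it is at least `2 ∫₀¹ f_α - s`; for the other
`s ≤ 1` the terms `n = 0, ±1` already exceed the energy at `1.28`.
-/

open Set

section Series

variable {G : Type*} [AddCommGroup G] [UniformSpace G] [IsUniformAddGroup G] [CompleteSpace G]
  [T2Space G]

lemma tsum_int_add_zero_of_even {f : ℤ → G} (hf : f.Even) (hs : Summable f) :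
    ∑' n, f n + f 0 = 2 • ∑' k : ℕ, f k := by
  have hnat : Summable fun k : ℕ => f k := hs.comp_injective Nat.cast_injective
  rw [two_nsmul, ← hnat.tsum_add hnat, ← hs.hasSum.nat_add_neg.tsum_eq]
  simp only [hf _]

lemma tsum_int_of_even {f : ℤ → G} (hf : f.Even) (hs : Summable f) :
    ∑' n, f n = f 0 + 2 • (f 1 + ∑' k : ℕ, f (k + 2)) := by
  have hnat : Summable fun k : ℕ => f k := hs.comp_injective Nat.cast_injective
  have hsplit : ∑' k : ℕ, f k = f 0 + f 1 + ∑' k : ℕ, f (k + 2) := by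
    simpa [Finset.sum_range_succ] using (hnat.sum_add_tsum_nat_add 2).symm
  rw [eq_sub_of_add_eq (tsum_int_add_zero_of_even hf hs), hsplit]
  abel

lemma one_div_add_two_pow_le (k : ℕ) {m : ℕ} (hm : 3 ≤ m) :
    1 / ((k : ℝ) + 2) ^ m ≤ 1 / 2 ^ (m - 1) * (1 / ((k : ℝ) + 1) - 1 / (k + 2)) := by
  have hbernoulli : (k : ℝ) + 1 ≤ (1 + k / 2) ^ (m - 1) := by
    have hm' : (2 : ℝ) ≤ (m - 1 : ℕ) := by exact_mod_cast (by omega : 2 ≤ m - 1)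
    calc (k : ℝ) + 1 = 1 + 2 * (k / 2) := by ring
      _ ≤ 1 + (m - 1 : ℕ) * (k / 2) := by gcongr
      _ ≤ (1 + k / 2) ^ (m - 1) := one_add_mul_le_pow (by linarith [k.cast_nonneg (α := ℝ)]) _
  have hpow : ((k : ℝ) + 2) ^ m = 2 ^ (m - 1) * ((1 + k / 2) ^ (m - 1) * (k + 2)) := by
    rw [← mul_assoc, ← mul_pow, show 2 * (1 + (k : ℝ) / 2) = k + 2 by ring,
      pow_sub_one_mul (by omega)]
  calc 1 / ((k : ℝ) + 2) ^ m ≤ 1 / (2 ^ (m - 1) * ((k + 1) * (k + 2))) := by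
        rw [hpow]
        gcongr
    _ = 1 / 2 ^ (m - 1) * (1 / ((k : ℝ) + 1) - 1 / (k + 2)) := by
        field_simp
        ring

lemma tsum_one_div_add_two_pow_le {m : ℕ} (hm : 3 ≤ m) :
    ∑' k : ℕ, 1 / ((k : ℝ) + 2) ^ m ≤ 1 / 2 ^ (m - 1) := by
  refine Real.tsum_le_of_sum_range_le (fun k => by positivity) fun N => ?_
  have htelescope : ∑ k ∈ Finset.range N, (1 / ((k : ℝ) + 1) - 1 / (k + 2)) = 1 - 1 / (N + 1) := by
    convert! Finset.sum_range_sub' (fun k : ℕ => 1 / ((k : ℝ) + 1)) N using 3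
    · push_cast
      ring
    · simp
  calc ∑ k ∈ Finset.range N, 1 / ((k : ℝ) + 2) ^ m
      ≤ ∑ k ∈ Finset.range N, 1 / 2 ^ (m - 1) * (1 / ((k : ℝ) + 1) - 1 / (k + 2)) :=
        Finset.sum_le_sum fun k _ => one_div_add_two_pow_le k hm
    _ = 1 / 2 ^ (m - 1) * (1 - 1 / (N + 1)) := by rw [← Finset.mul_sum, htelescope]
    _ ≤ 1 / 2 ^ (m - 1) := mul_le_of_le_one_right (by positivity) (sub_le_self _ (by positivity))

lemma norm_tsum_le_of_norm_le_div_pow {E : Type*} [SeminormedAddCommGroup E] {f : ℕ → E} {C : ℝ}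
    {m : ℕ} (hC : 0 ≤ C) (hm : 3 ≤ m) (hf : ∀ k, ‖f k‖ ≤ C / ((k : ℝ) + 2) ^ m) :
    ‖∑' k, f k‖ ≤ C / 2 ^ (m - 1) := by
  have hsum : Summable fun k : ℕ => 1 / ((k : ℝ) + 2) ^ m := by
    exact_mod_cast (summable_nat_add_iff 2).2 (Real.summable_one_div_nat_pow.2 (by omega : 1 < m))
  calc ‖∑' k, f k‖ ≤ C * ∑' k : ℕ, 1 / ((k : ℝ) + 2) ^ m :=
        tsum_of_norm_bounded (hsum.hasSum.mul_left C) fun k => (hf k).trans_eq (by ring)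
    _ ≤ C * (1 / 2 ^ (m - 1)) := by
        gcongr
        exact tsum_one_div_add_two_pow_le hm
    _ = C / 2 ^ (m - 1) := by ring

end Series

section Integral

lemma integral_le_mul_sum_of_antitoneOn {f : ℝ → ℝ} {s : ℝ} (hs : 0 ≤ s) (N : ℕ)
    (hf : AntitoneOn f (Icc 0 (s * N))) :
    ∫ x in 0..s * N, f x ≤ s * ∑ k ∈ Finset.range N, f (s * k) := by
  have hcomp : AntitoneOn (fun x => f (s * x)) (Icc 0 (0 + N)) := fun x hx y hy hxy =>
    have maps (z : ℝ) (hz : z ∈ Icc 0 (0 + (N : ℝ))) : s * z ∈ Icc 0 (s * N) :=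
      ⟨mul_nonneg hs hz.1, mul_le_mul_of_nonneg_left (by simpa using hz.2) hs⟩
    hf (maps x hx) (maps y hy) (mul_le_mul_of_nonneg_left hxy hs)
  have h := mul_le_mul_of_nonneg_left hcomp.integral_le_sum hs
  simpa only [intervalIntegral.mul_integral_comp_mul_left, zero_add, mul_zero] using h

lemma integral_le_mul_tsum_of_antitoneOn {f : ℝ → ℝ} {s a : ℝ} (hs : 0 < s) (ha : 0 ≤ a)
    (hf : AntitoneOn f (Ici 0)) (hf0 : ∀ x, 0 ≤ x → 0 ≤ f x)
    (hsum : Summable fun k : ℕ => f (s * k)) :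
    ∫ x in 0..a, f x ≤ s * ∑' k : ℕ, f (s * k) := by
  obtain ⟨N, hN⟩ := exists_nat_ge (a / s)
  have haN : a ≤ s * N := (div_le_iff₀' hs).1 hN
  have hint : IntervalIntegrable f MeasureTheory.volume 0 (s * N) :=
    AntitoneOn.intervalIntegrable <| hf.mono <| by
      rw [uIcc_of_le (ha.trans haN)]
      exact Icc_subset_Ici_self
  calc ∫ x in 0..a, f x ≤ ∫ x in 0..s * N, f x := by
        refine intervalIntegral.integral_mono_interval le_rfl ha haN ?_ hint
        exact MeasureTheory.ae_restrict_of_forall_mem measurableSet_Ioc fun x hx => hf0 x hx.1.le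
    _ ≤ s * ∑ k ∈ Finset.range N, f (s * k) :=
        integral_le_mul_sum_of_antitoneOn hs.le N (hf.mono Icc_subset_Ici_self)
    _ ≤ s * ∑' k : ℕ, f (s * k) := by
        gcongr
        exact hsum.sum_le_tsum _ fun k _ => hf0 _ (by positivity)

lemma antitoneOn_one_div_one_add_pow (m : ℕ) :
    AntitoneOn (fun x : ℝ => 1 / (1 + x ^ m)) (Ici 0) := by
  intro x hx y _ hxy
  have hx0 : 0 ≤ x := hx
  dsimp only
  gcongr

lemma le_integral_one_div_one_add_pow (m : ℕ) :
    1 - 1 / ((m : ℝ) + 1) + 1 / (2 * (2 * m + 1)) ≤ ∫ x in (0 : ℝ)..1, 1 / (1 + x ^ m) := by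
  have hpoly : ∫ x in (0 : ℝ)..1, (1 - x ^ m + x ^ (2 * m) / 2)
      = 1 - 1 / ((m : ℝ) + 1) + 1 / (2 * (2 * m + 1)) := by
    rw [intervalIntegral.integral_add, intervalIntegral.integral_sub,
      intervalIntegral.integral_div, integral_pow, integral_pow]
    · simp
      ring
    all_goals exact Continuous.intervalIntegrable (by fun_prop) _ _
  rw [← hpoly]
  refine intervalIntegral.integral_mono_on zero_le_one
    (Continuous.intervalIntegrable (by fun_prop) _ _)
    (AntitoneOn.intervalIntegrable ((antitoneOn_one_div_one_add_pow m).mono ?_)) fun x hx => ?_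
  · rw [uIcc_of_le zero_le_one]
    exact Icc_subset_Ici_self
  · have hv0 : 0 ≤ x ^ m := pow_nonneg hx.1 m
    have hv1 : x ^ m ≤ 1 := pow_le_one₀ hx.1 hx.2
    rw [le_div_iff₀ (by positivity), pow_mul']
    nlinarith [mul_nonneg (sq_nonneg (x ^ m)) (sub_nonneg.2 hv1)]

end Integral

section Energy

variable {α : ℕ}

lemma summable_one_div_one_add_mul_int_pow (hα : Even α) (hα2 : 2 ≤ α) {c : ℝ} (hc : c ≠ 0) :
    Summable fun n : ℤ => 1 / (1 + (c * n) ^ α) := by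
  have hpow : Summable fun n : ℤ => 1 / c ^ α * (1 / (n : ℝ) ^ α) :=
    (Real.summable_one_div_int_pow.2 (by omega)).mul_left _
  refine hpow.of_norm_bounded_eventually ?_
  filter_upwards [(finite_singleton (0 : ℤ)).compl_mem_cofinite] with n hn
  have hn0 : (n : ℝ) ≠ 0 := by simpa using hn
  have hcn : 0 < (c * n) ^ α := hα.pow_pos (mul_ne_zero hc hn0)
  rw [Real.norm_of_nonneg (by positivity), one_div_mul_one_div, ← mul_pow]
  gcongr
  linarith

lemma latticeEnergy_eq (hα : Even α) (hα2 : 2 ≤ α) {t : ℝ} (ht : t ≠ 0) :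
    latticeEnergy α t = t + 2 * (t * (1 / (1 + t ^ α)) +
      ∑' k : ℕ, t * (1 / (1 + (t * ((k : ℝ) + 2)) ^ α))) := by
  have hα0 : α ≠ 0 := by omega
  unfold latticeEnergy
  rw [tsum_int_of_even (fun n => by simp [hα.neg_pow])
    ((summable_one_div_one_add_mul_int_pow hα hα2 ht).mul_left t), nsmul_eq_mul]
  simp [hα0]

lemma latticeEnergy_ge (hα : Even α) (hα2 : 2 ≤ α) {t : ℝ} (ht : 0 < t) :
    t + 2 * (t * (1 / (1 + t ^ α))) ≤ latticeEnergy α t := by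
  have htail : 0 ≤ ∑' k : ℕ, t * (1 / (1 + (t * ((k : ℝ) + 2)) ^ α)) :=
    tsum_nonneg fun k => by positivity
  rw [latticeEnergy_eq hα hα2 ht.ne']
  linarith

lemma latticeEnergy_le (hα : Even α) (hα3 : 3 ≤ α) {t : ℝ} (ht : 0 < t) :
    latticeEnergy α t ≤ t + 2 * (t * (1 / (1 + t ^ α)) + t / t ^ α / 2 ^ (α - 1)) := by
  rw [latticeEnergy_eq hα (by omega) ht.ne']
  gcongr
  refine (Real.le_norm_self _).trans
    (norm_tsum_le_of_norm_le_div_pow (by positivity) hα3 fun k => ?_)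
  rw [Real.norm_of_nonneg (by positivity), mul_one_div, div_div, ← mul_pow]
  gcongr
  linarith

lemma two_mul_integral_le_latticeEnergy_add (hα : Even α) (hα2 : 2 ≤ α) {s : ℝ} (hs : 0 < s) :
    2 * ∫ x in (0 : ℝ)..1, 1 / (1 + x ^ α) ≤ latticeEnergy α s + s := by
  have hα0 : α ≠ 0 := by omega
  have hsum := summable_one_div_one_add_mul_int_pow hα hα2 hs.ne'
  have henergy := tsum_int_add_zero_of_even (fun n => by simp [hα.neg_pow]) (hsum.mul_left s)
  have hriemann := integral_le_mul_tsum_of_antitoneOn hs zero_le_one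
    (antitoneOn_one_div_one_add_pow α) (fun x hx => by positivity)
    (by simpa [Function.comp_def] using hsum.comp_injective (Nat.cast_injective (R := ℤ)))
  simp only [Int.cast_zero, mul_zero, zero_pow hα0, add_zero, div_one, mul_one, Int.cast_natCast,
    tsum_mul_left (a := s), nsmul_eq_mul, Nat.cast_ofNat] at henergy
  rw [latticeEnergy, tsum_mul_left, henergy]
  gcongr

end Energy

section Minimizer

variable {α : ℕ}

-- `1.28` is close to the minimizer for `α = 12`, the case in which the minimum is largest.
lemma latticeEnergy_one_point_two_eight_lt (hα : Even α) (hα12 : 12 ≤ α) :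
    latticeEnergy α 1.28 < 1.408 := by
  have hpow : (1.28 : ℝ) ^ 12 ≤ 1.28 ^ α := pow_le_pow_right₀ (by norm_num) hα12
  have htwo : (2 : ℝ) ^ 11 ≤ 2 ^ (α - 1) := pow_le_pow_right₀ (by norm_num) (by omega)
  calc latticeEnergy α 1.28
      ≤ 1.28 + 2 * (1.28 * (1 / (1 + 1.28 ^ α)) + 1.28 / 1.28 ^ α / 2 ^ (α - 1)) :=
        latticeEnergy_le hα (by omega) (by norm_num)
    _ ≤ 1.28 + 2 * (1.28 * (1 / (1 + 1.28 ^ 12)) + 1.28 / 1.28 ^ 12 / 2 ^ 11) := by gcongr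
    _ < 1.408 := by norm_num

lemma lt_latticeEnergy_of_le (hα : Even α) (hα12 : 12 ≤ α) {s : ℝ} (hs : 0 < s)
    (hs' : s ≤ 0.477) : 1.408 < latticeEnergy α s := by
  have hA : (12 : ℝ) ≤ α := by exact_mod_cast hα12
  have hint : (0.943 : ℝ) ≤ 1 - 1 / (α + 1) + 1 / (2 * (2 * α + 1)) := by
    have heq : 1 - 1 / ((α : ℝ) + 1) + 1 / (2 * (2 * α + 1))
        = 1 - (3 * α + 1) / (2 * (α + 1) * (2 * α + 1)) := by
      field_simp
      ring
    have hle : (3 * (α : ℝ) + 1) / (2 * (α + 1) * (2 * α + 1)) ≤ 0.057 := by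
      rw [div_le_iff₀ (by positivity)]
      nlinarith
    linarith
  linarith [le_integral_one_div_one_add_pow α,
    two_mul_integral_le_latticeEnergy_add hα (by omega) hs]

lemma lt_latticeEnergy_of_mem_Icc (hα : Even α) (hα12 : 12 ≤ α) {s : ℝ}
    (hs : s ∈ Icc 0.477 1) : 1.408 < latticeEnergy α s := by
  obtain ⟨hs₀, hs₁⟩ := hs
  have hpos : 0 < s := by linarith
  refine lt_of_lt_of_le ?_ (latticeEnergy_ge hα (by omega) hpos)
  rcases le_or_gt s 0.71 with hle | hgt
  · have hpow : s ^ α ≤ 0.017 :=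
      calc s ^ α ≤ s ^ 12 := pow_le_pow_of_le_one hpos.le hs₁ hα12
        _ ≤ 0.71 ^ 12 := by gcongr
        _ ≤ 0.017 := by norm_num
    have hterm : 0.98 ≤ 1 / (1 + s ^ α) := by
      rw [le_div_iff₀ (by positivity)]
      linarith
    nlinarith
  · have hterm : 1 / 2 ≤ 1 / (1 + s ^ α) := by
      have := pow_le_one₀ (n := α) hpos.le hs₁
      gcongr
      linarith
    nlinarith

lemma one_lt_of_latticeEnergy_le (hα : Even α) (hα12 : 12 ≤ α) {s : ℝ} (hs : 0 < s)
    (h : latticeEnergy α s ≤ latticeEnergy α 1.28) : 1 < s := by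
  by_contra! hs₁
  have hupper := h.trans_lt (latticeEnergy_one_point_two_eight_lt hα hα12)
  rcases le_total s 0.477 with hle | hge
  · exact (lt_latticeEnergy_of_le hα hα12 hs hle).not_gt hupper
  · exact (lt_latticeEnergy_of_mem_Icc hα hα12 ⟨hge, hs₁⟩).not_gt hupper

end Minimizer

section CriticalEquation

/-- The derivative at `x` of `x ↦ x f_α(x)`. By homogeneity, the derivative of `t ↦ t f_α(t n)` is
`energyDensityDeriv α (t n)`, so that sums of these values give the derivative of the energy. -/
noncomputable def energyDensityDeriv (α : ℕ) (x : ℝ) : ℝ :=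
  (1 - ((α : ℝ) - 1) * x ^ α) / (1 + x ^ α) ^ 2

variable {α : ℕ}

lemma hasDerivAt_mul_one_div_one_add_mul_pow {x t : ℝ} (h : 1 + (t * x) ^ α ≠ 0) :
    HasDerivAt (fun t : ℝ => t * (1 / (1 + (t * x) ^ α))) (energyDensityDeriv α (t * x)) t := by
  have hden : HasDerivAt (fun t : ℝ => 1 + (t * x) ^ α) (α * (t * x) ^ (α - 1) * x) t := by
    simpa using (((hasDerivAt_id t).mul_const x).pow α).const_add 1
  have heuler : (α : ℝ) * (t * x) ^ α = α * (t * x) ^ (α - 1) * x * t := by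
    rcases Nat.eq_zero_or_pos α with rfl | hα
    · simp
    · rw [← pow_sub_one_mul hα.ne']
      ring
  simp only [mul_one_div]
  refine ((hasDerivAt_id' t).fun_div hden h).congr_deriv ?_
  rw [energyDensityDeriv]
  congr 1
  linear_combination heuler

lemma abs_energyDensityDeriv_le (hα : Even α) (hα2 : 2 ≤ α) (x : ℝ) :
    |energyDensityDeriv α x| ≤ ((α : ℝ) - 1) * (1 / (1 + x ^ α)) := by
  have hA : (2 : ℝ) ≤ α := by exact_mod_cast hα2
  have hv : 0 ≤ x ^ α := hα.pow_nonneg x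
  rw [energyDensityDeriv, abs_div, abs_of_pos (by positivity : 0 < (1 + x ^ α) ^ 2),
    div_le_iff₀ (by positivity)]
  calc |1 - ((α : ℝ) - 1) * x ^ α| ≤ ((α : ℝ) - 1) * (1 + x ^ α) := by
        rw [abs_le]
        constructor <;> nlinarith
    _ = ((α : ℝ) - 1) * (1 / (1 + x ^ α)) * (1 + x ^ α) ^ 2 := by field_simp

lemma summable_energyDensityDeriv (hα : Even α) (hα2 : 2 ≤ α) {c : ℝ} (hc : c ≠ 0) :
    Summable fun n : ℤ => energyDensityDeriv α (c * n) :=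
  ((summable_one_div_one_add_mul_int_pow hα hα2 hc).mul_left ((α : ℝ) - 1)).of_norm_bounded
    fun n => abs_energyDensityDeriv_le hα hα2 (c * n)

lemma hasDerivAt_latticeEnergy (hα : Even α) (hα2 : 2 ≤ α) {s : ℝ} (hs : 0 < s) :
    HasDerivAt (latticeEnergy α) (∑' n : ℤ, energyDensityDeriv α (s * n)) s := by
  have hA : (0 : ℝ) ≤ (α : ℝ) - 1 := by
    have : (2 : ℝ) ≤ α := by exact_mod_cast hα2
    linarith
  have hbound (n : ℤ) (t : ℝ) (ht : t ∈ Ioi (s / 2)) :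
      ‖energyDensityDeriv α (t * n)‖ ≤ ((α : ℝ) - 1) * (1 / (1 + (s / 2 * n) ^ α)) := by
    have ht' : s / 2 ≤ t := ht.le
    have hn : 0 ≤ (n : ℝ) ^ α := hα.pow_nonneg _
    refine (abs_energyDensityDeriv_le hα hα2 (t * n)).trans ?_
    rw [mul_pow, mul_pow]
    gcongr
  have hmem : s ∈ Ioi (s / 2) := half_lt_self hs
  exact hasDerivAt_tsum_of_isPreconnected
    ((summable_one_div_one_add_mul_int_pow hα hα2 (half_pos hs).ne').mul_left _) isOpen_Ioi
    isPreconnected_Ioi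
    (fun n t _ => hasDerivAt_mul_one_div_one_add_mul_pow
      (by linarith [hα.pow_nonneg (t * n)])) hbound hmem
    ((summable_one_div_one_add_mul_int_pow hα hα2 hs.ne').mul_left s) hmem

lemma abs_one_add_two_mul_energyDensityDeriv_le (hα : Even α) (hα3 : 3 ≤ α) {s : ℝ} (hs : 0 < s)
    (hmin : IsLocalMin (latticeEnergy α) s) :
    |1 + 2 * energyDensityDeriv α s| ≤ 2 * (((α : ℝ) - 1) / s ^ α / 2 ^ (α - 1)) := by
  have hα2 : 2 ≤ α := by omega
  have hA : (0 : ℝ) ≤ (α : ℝ) - 1 := by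
    have : (2 : ℝ) ≤ α := by exact_mod_cast hα2
    linarith
  have hα0 : α ≠ 0 := by omega
  have hcrit : 1 + 2 * energyDensityDeriv α s
      = -(2 * ∑' k : ℕ, energyDensityDeriv α (s * ((k : ℝ) + 2))) := by
    have hzero := hmin.hasDerivAt_eq_zero (hasDerivAt_latticeEnergy hα hα2 hs)
    rw [tsum_int_of_even (fun n => by simp [energyDensityDeriv, hα.neg_pow])
      (summable_energyDensityDeriv hα hα2 hs.ne'), nsmul_eq_mul] at hzero
    have hD0 : energyDensityDeriv α 0 = 1 := by simp [energyDensityDeriv, hα0]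
    push_cast at hzero
    rw [mul_zero, mul_one, hD0] at hzero
    linarith
  rw [hcrit, abs_neg, abs_mul, abs_two]
  gcongr
  rw [← Real.norm_eq_abs]
  refine norm_tsum_le_of_norm_le_div_pow (by positivity) hα3 fun k => ?_
  refine (abs_energyDensityDeriv_le hα hα2 _).trans ?_
  rw [mul_one_div, div_div, ← mul_pow]
  gcongr
  linarith

end CriticalEquation

section QuadraticRoot

lemma abs_sub_root_mul_half_le {A u : ℝ} (hA : 6 ≤ A) (hu : 1 ≤ u) :
    |u - (A - 2 + √((A - 2) ^ 2 - 3))| * (u / 2) ≤ |u ^ 2 - 2 * (A - 2) * u + 3| := by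
  set r := √((A - 2) ^ 2 - 3)
  have hr_sq : r ^ 2 = (A - 2) ^ 2 - 3 := Real.sq_sqrt (by nlinarith)
  have hsmall_root : A - 2 - r ≤ 1 / 2 := by
    have : A - 5 / 2 ≤ r := Real.le_sqrt_of_sq_le (by nlinarith)
    linarith
  have hfactor : u ^ 2 - 2 * (A - 2) * u + 3 = (u - (A - 2 + r)) * (u - (A - 2 - r)) := by
    linear_combination hr_sq
  rw [hfactor, abs_mul]
  gcongr
  exact le_trans (by linarith) (le_abs_self _)

lemma abs_pow_sub_root_le_of_isLocalMin {α : ℕ} (hα : Even α) (hα6 : 6 ≤ α) {s : ℝ} (hs : 1 ≤ s)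
    (hmin : IsLocalMin (latticeEnergy α) s) :
    |s ^ α - ((α : ℝ) - 2 + √(((α : ℝ) - 2) ^ 2 - 3))| ≤ 16 * ((α : ℝ) - 1) / 2 ^ (α - 1) := by
  have hA : (6 : ℝ) ≤ α := by exact_mod_cast hα6
  have hu : 1 ≤ s ^ α := one_le_pow₀ hs
  have hcrit := abs_one_add_two_mul_energyDensityDeriv_le hα (by omega) (by linarith) hmin
  have hbound_nonneg := (abs_nonneg _).trans hcrit
  set u := s ^ α with hu_def
  have hquad : u ^ 2 - 2 * ((α : ℝ) - 2) * u + 3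
      = (1 + 2 * energyDensityDeriv α s) * (1 + u) ^ 2 := by
    rw [energyDensityDeriv, ← hu_def]
    field_simp
    ring
  refine le_of_mul_le_mul_right ?_ (by linarith : 0 < u / 2)
  calc |u - ((α : ℝ) - 2 + √(((α : ℝ) - 2) ^ 2 - 3))| * (u / 2)
      ≤ |u ^ 2 - 2 * ((α : ℝ) - 2) * u + 3| := abs_sub_root_mul_half_le hA hu
    _ = |1 + 2 * energyDensityDeriv α s| * (1 + u) ^ 2 := by
        rw [hquad, abs_mul, abs_of_nonneg (sq_nonneg (1 + u))]
    _ ≤ 2 * (((α : ℝ) - 1) / u / 2 ^ (α - 1)) * (2 * u) ^ 2 := by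
        gcongr
        linarith
    _ = 16 * ((α : ℝ) - 1) / 2 ^ (α - 1) * (u / 2) := by
        field_simp
        ring

end QuadraticRoot

/-- If `α ≥ 12` is an even integer and `s_α > 0` minimizes the lattice energy, then
`|s_α^α − (α − 2 + √((α−2)² − 3))| ≤ (2α/0.99²)·(α+1)²/(2^{α−1}(α−1))`. -/
theorem statement10 (α : ℕ) (hα : Even α) (hα12 : 12 ≤ α) (s : ℝ) (hs : 0 < s)
    (hmin : ∀ t : ℝ, 0 < t → latticeEnergy α s ≤ latticeEnergy α t) :
    |s ^ α - ((α : ℝ) - 2 + Real.sqrt (((α : ℝ) - 2) ^ 2 - 3))|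
      ≤ (2 * (α : ℝ) / 0.99 ^ 2) * ((α : ℝ) + 1) ^ 2 / (2 ^ (α - 1) * ((α : ℝ) - 1)) := by
  have one_lt_s : 1 < s :=
    one_lt_of_latticeEnergy_le hα hα12 hs (hmin 1.28 (by norm_num))
  have hloc : IsLocalMin (latticeEnergy α) s := by
    filter_upwards [lt_mem_nhds hs] with t ht using hmin t ht
  have hA : (12 : ℝ) ≤ α := by exact_mod_cast hα12
  have hA1 : (0 : ℝ) < (α : ℝ) - 1 := by linarith
  have hcubic : 16 * ((α : ℝ) - 1) * (α - 1) ≤ 2 * α / 0.99 ^ 2 * (α + 1) ^ 2 := by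
    have hcoeff : 2 * (α : ℝ) ≤ 2 * α / 0.99 ^ 2 :=
      le_div_self (by positivity) (by norm_num) (by norm_num)
    calc 16 * ((α : ℝ) - 1) * (α - 1) ≤ 2 * α * (α + 1) ^ 2 := by nlinarith
      _ ≤ 2 * α / 0.99 ^ 2 * (α + 1) ^ 2 := by gcongr
  calc |s ^ α - ((α : ℝ) - 2 + √(((α : ℝ) - 2) ^ 2 - 3))|
      ≤ 16 * ((α : ℝ) - 1) / 2 ^ (α - 1) :=
        abs_pow_sub_root_le_of_isLocalMin hα (by omega) one_lt_s.le hloc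
    _ = 16 * ((α : ℝ) - 1) * (α - 1) / (2 ^ (α - 1) * (α - 1)) := by
        rw [mul_div_mul_right _ _ hA1.ne']
    _ ≤ _ := by gcongr
end

section
/- Let α ≥ 12 be an even integer, let s_α > 0 be a minimizer of t ↦ Σ_{n∈ℤ} t·f_α(t n) over t > 0, and set F_α(x) = 1/(1 + s_α^α x^α). Then: (i) 2α − 5 ≤ s_α^α ≤ 2α − 3; (ii) 1/(2α−2) ≤ F_α(1) ≤ 1/(2α−4); and (iii) (1/2)(1 − 1/(2α−4)) ≤ −F_α′(1) ≤ α/(2α−4), where F_α′ denotes the derivative of F_α. -/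
/-!
Split the energy as `φ(t) + 2 T(t)`, where `φ(t) = t (1 + 2 / (1 + t ^ α))` collects `|n| ≤ 1` and
`T` collects `n ≥ 2`. With `y = t ^ α` one has
`φ'(t) = (y ^ 2 - 2 (α - 2) y + 3) / (1 + y) ^ 2`, whose relevant zero is close to `2 α - 4`, so the
bounds on `s ^ α` follow once `T` is under one-sided control near the minimizer `s`.

* `T` decreases on `[1, ∞)`. If `1 ≤ s`, minimality to the right of `s` then gives `0 ≤ φ'(s)`.
* To the left of `s`, `T` exceeds `T(s)` by at most `(ζ(α) - 1) t (1 / t ^ α - 1 / s ^ α)`, so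
  minimality gives `φ'(s) ≤ 2 α (ζ(α) - 1) / s ^ α`, which is at most `1 / s ^ α`.

That `1 ≤ s` comes from comparing with `t = 4 / 3`. For small `t` the energy is at least `2 - t`,
because `1 / (1 + x ^ α)` dominates the derivative of `x / (1 + x ^ α) ^ (1 / α)`, which increases
to `1`; for the other `t < 1` the three central terms are already too large.
-/

open Set Filter Topology

lemma mul_nonneg_of_isMinOn_segment {f : ℝ → ℝ} {f' a b : ℝ} (hmin : IsMinOn f (segment ℝ a b) a)
    (hf : HasDerivAt f f' a) : 0 ≤ (b - a) * f' := by
  simpa using hmin.localize.hasFDerivWithinAt_nonneg hf.hasFDerivAt.hasFDerivWithinAt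
    (sub_mem_posTangentConeAt_of_segment_subset subset_rfl)

lemma hasDerivAt_one_div_one_add_mul_pow (n : ℕ) {c x : ℝ} (h : 1 + c * x ^ n ≠ 0) :
    HasDerivAt (fun x ↦ 1 / (1 + c * x ^ n)) (-(n * c * x ^ (n - 1)) / (1 + c * x ^ n) ^ 2) x := by
  simp only [one_div]
  exact ((((hasDerivAt_pow n x).const_mul c).const_add 1).fun_inv h).congr_deriv (by ring)

lemma one_div_one_add_sub_le {x y : ℝ} (hx : 0 < x) (hxy : x ≤ y) :
    1 / (1 + x) - 1 / (1 + y) ≤ 1 / x - 1 / y := by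
  have gap (z : ℝ) (hz : 0 < z) : 1 / z - 1 / (1 + z) = 1 / (z * (1 + z)) := by
    field_simp
    ring
  have hy : 0 < y := hx.trans_le hxy
  have : 1 / (y * (1 + y)) ≤ 1 / (x * (1 + x)) := by gcongr
  linarith [gap x hx, gap y hy]

lemma antitoneOn_div_one_add_mul_pow {n : ℕ} (hn : 2 ≤ n) {c : ℝ} (hc : 1 ≤ c) :
    AntitoneOn (fun t : ℝ ↦ t / (1 + c * t ^ n)) (Ici 1) := by
  intro s (hs : 1 ≤ s) t (ht : 1 ≤ t) hst
  obtain ⟨g, rfl⟩ := Nat.exists_eq_add_of_le' hn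
  have hpow : t - s ≤ t ^ (g + 1) - s ^ (g + 1) := calc
    t - s ≤ s ^ g * (t - s) := le_mul_of_one_le_left (sub_nonneg.2 hst) (one_le_pow₀ hs)
    _ = s ^ g * t - s ^ (g + 1) := by ring
    _ ≤ t ^ g * t - s ^ (g + 1) := by gcongr
    _ = t ^ (g + 1) - s ^ (g + 1) := by ring
  have hcst : 1 ≤ c * (s * t) := one_le_mul_of_one_le_of_one_le hc
    (one_le_mul_of_one_le_of_one_le hs ht)
  have hcross : t - s ≤ c * (s * t) * (t ^ (g + 1) - s ^ (g + 1)) :=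
    hpow.trans (le_mul_of_one_le_left ((sub_nonneg.2 hst).trans hpow) hcst)
  rw [div_le_div_iff₀ (by positivity) (by positivity)]
  linear_combination hcross

/-- The sum of `1 / n ^ α` over the integers `n ≥ m`, that is, the Hurwitz zeta value `ζ(α, m)`. It
measures how fast the tail of the lattice energy grows as the lattice shrinks. -/
noncomputable def zetaTail (α m : ℕ) : ℝ :=
  ∑' k : ℕ, 1 / ((k + m : ℕ) : ℝ) ^ α

lemma summable_zetaTail {α : ℕ} (hα : 1 < α) (m : ℕ) :
    Summable fun k : ℕ ↦ 1 / ((k + m : ℕ) : ℝ) ^ α :=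
  (summable_nat_add_iff m).2 (Real.summable_one_div_nat_pow.2 hα)

lemma zetaTail_nonneg (α m : ℕ) : 0 ≤ zetaTail α m :=
  tsum_nonneg fun _ ↦ by positivity

lemma zetaTail_add_le {α m : ℕ} (hα : 1 < α) (hm : 0 < m) (β : ℕ) :
    zetaTail (α + β) m ≤ zetaTail α m / m ^ β := by
  rw [zetaTail, zetaTail, ← tsum_div_const]
  refine (summable_zetaTail (by lia) m).tsum_le_tsum (fun k ↦ ?_)
    ((summable_zetaTail hα m).div_const _)
  rw [pow_add, ← div_div]
  gcongr
  lia

lemma zetaTail_two_two_le_one : zetaTail 2 2 ≤ 1 := by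
  have hsplit : (1 : ℝ) + zetaTail 2 2 = Real.pi ^ 2 / 6 := by
    have hsum := hasSum_zeta_two.summable.sum_add_tsum_nat_add 2
    rw [hasSum_zeta_two.tsum_eq] at hsum
    simpa [Finset.sum_range_succ, zetaTail] using hsum
  nlinarith [Real.pi_lt_d2, Real.pi_pos]

lemma zetaTail_two_le {α : ℕ} (hα : 2 ≤ α) : zetaTail α 2 ≤ 4 / 2 ^ α := by
  obtain ⟨β, rfl⟩ := Nat.exists_eq_add_of_le hα
  calc zetaTail (2 + β) 2 ≤ zetaTail 2 2 / 2 ^ β := by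
        exact_mod_cast zetaTail_add_le one_lt_two two_pos β
    _ ≤ 1 / 2 ^ β := by gcongr; exact zetaTail_two_two_le_one
    _ = 4 / 2 ^ (2 + β) := by rw [pow_add]; field_simp; norm_num

lemma eight_mul_le_two_pow {n : ℕ} (hn : 6 ≤ n) : 8 * n ≤ 2 ^ n := by
  induction n, hn using Nat.le_induction with
  | base => norm_num
  | succ n _ ih => rw [pow_succ]; lia

lemma two_mul_mul_zetaTail_two_le_one {α : ℕ} (hα : 6 ≤ α) : 2 * α * zetaTail α 2 ≤ 1 := by
  have hpow : (8 * α : ℝ) ≤ 2 ^ α := by exact_mod_cast eight_mul_le_two_pow hα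
  calc 2 * α * zetaTail α 2 ≤ 2 * α * (4 / 2 ^ α) := by gcongr; exact zetaTail_two_le (by lia)
    _ = 8 * α / 2 ^ α := by ring
    _ ≤ 1 := (div_le_one (by positivity)).2 hpow

/-- The part of the lattice energy carried by `n = 0` and `n = ±1`. -/
noncomputable def centralEnergy (α : ℕ) (t : ℝ) : ℝ :=
  t * (1 + 2 / (1 + t ^ α))

/-- The part of the lattice energy carried by the integers `n ≥ m`; for even `α` the integers
`n ≤ -m` carry the same amount. -/
noncomputable def tailEnergy (α m : ℕ) (t : ℝ) : ℝ :=
  ∑' k : ℕ, t / (1 + (t * (k + m : ℕ)) ^ α)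

section Splitting

variable {α m : ℕ} {t : ℝ}

lemma summable_tailEnergy (hα : 1 < α) (m : ℕ) (ht : 0 < t) :
    Summable fun k : ℕ ↦ t / (1 + (t * (k + m : ℕ)) ^ α) := by
  refine (summable_nat_add_iff m (f := fun n : ℕ ↦ t / (1 + (t * n) ^ α))).2
    ((summable_nat_add_iff 1).1 ?_)
  refine .of_nonneg_of_le (fun k ↦ by positivity) (fun k ↦ ?_)
    ((summable_zetaTail hα 1).mul_left (t / t ^ α))
  rw [div_mul_div_comm, mul_one, ← mul_pow]
  gcongr
  exact le_add_of_nonneg_left zero_le_one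

lemma tailEnergy_nonneg (α m : ℕ) (ht : 0 ≤ t) : 0 ≤ tailEnergy α m t :=
  tsum_nonneg fun _ ↦ by positivity

lemma tailEnergy_eq_add (hα : 1 < α) (m : ℕ) (ht : 0 < t) :
    tailEnergy α m t = t / (1 + (t * m) ^ α) + tailEnergy α (m + 1) t := by
  rw [tailEnergy, (summable_tailEnergy hα m ht).tsum_eq_zero_add, tailEnergy, zero_add]
  simp only [add_assoc, add_comm 1 m]

lemma latticeEnergy_eq_self_add (hα : Even α) (hα1 : 1 < α) (ht : 0 < t) :
    latticeEnergy α t = t + 2 * tailEnergy α 1 t := by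
  have hα0 : α ≠ 0 := by lia
  let f : ℤ → ℝ := fun n ↦ t * (1 / (1 + (t * n) ^ α))
  have hzero : f 0 = t := by simp [f, hα0]
  have hpos (k : ℕ) : f (k + 1) = t / (1 + (t * (k + 1 : ℕ)) ^ α) := by simp [f, div_eq_mul_inv]
  have hneg (k : ℕ) : f (-(k + 1)) = t / (1 + (t * (k + 1 : ℕ)) ^ α) := by
    rw [← hpos]
    simp only [f, Int.cast_neg, mul_neg, hα.neg_pow]
  have hsum := summable_tailEnergy hα1 1 ht
  change ∑' n, f n = _
  rw [tsum_of_add_one_of_neg_add_one (hsum.congr fun k ↦ (hpos k).symm)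
    (hsum.congr fun k ↦ (hneg k).symm), hzero, tsum_congr hpos, tsum_congr hneg, tailEnergy]
  ring

lemma latticeEnergy_eq_centralEnergy_add (hα : Even α) (hα1 : 1 < α) (ht : 0 < t) :
    latticeEnergy α t = centralEnergy α t + 2 * tailEnergy α 2 t := by
  rw [latticeEnergy_eq_self_add hα hα1 ht, tailEnergy_eq_add hα1 1 ht, centralEnergy, Nat.cast_one,
    mul_one]
  ring

lemma antitoneOn_tailEnergy (hα : 2 ≤ α) (hm : 0 < m) : AntitoneOn (tailEnergy α m) (Ici 1) := by
  intro s (hs : 1 ≤ s) t (ht : 1 ≤ t) hst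
  refine (summable_tailEnergy hα m (by linarith)).tsum_le_tsum (fun k ↦ ?_)
    (summable_tailEnergy hα m (by linarith))
  have hn : (1 : ℝ) ≤ (k + m : ℕ) := by exact_mod_cast (by lia : 1 ≤ k + m)
  simpa only [mul_pow, mul_comm] using antitoneOn_div_one_add_mul_pow hα (one_le_pow₀ hn) hs ht hst

lemma tailEnergy_le_add (hα : 1 < α) (hm : 0 < m) {s : ℝ} (ht : 0 < t) (hts : t ≤ s) :
    tailEnergy α m t ≤ tailEnergy α m s + zetaTail α m * (t * (1 / t ^ α - 1 / s ^ α)) := by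
  have hs := ht.trans_le hts
  have hsum := summable_tailEnergy hα m hs
  have hzeta := (summable_zetaTail hα m).mul_right (t * (1 / t ^ α - 1 / s ^ α))
  rw [tailEnergy, tailEnergy, zetaTail, ← tsum_mul_right, ← hsum.tsum_add hzeta]
  refine (summable_tailEnergy hα m ht).tsum_le_tsum (fun k ↦ ?_) (hsum.add hzeta)
  set n : ℝ := ((k + m : ℕ) : ℝ)
  have hn : 0 < n := by positivity
  have hgap := one_div_one_add_sub_le (x := (t * n) ^ α) (y := (s * n) ^ α) (by positivity)
    (by gcongr)
  calc t / (1 + (t * n) ^ α)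
      = t * (1 / (1 + (s * n) ^ α)) + t * (1 / (1 + (t * n) ^ α) - 1 / (1 + (s * n) ^ α)) := by ring
    _ ≤ s * (1 / (1 + (s * n) ^ α)) + t * (1 / (t * n) ^ α - 1 / (s * n) ^ α) := by gcongr
    _ = s / (1 + (s * n) ^ α) + 1 / n ^ α * (t * (1 / t ^ α - 1 / s ^ α)) := by
        rw [mul_pow, mul_pow]
        field_simp

lemma tailEnergy_le (hα : 1 < α) (hm : 0 < m) (ht : 0 < t) :
    tailEnergy α m t ≤ t / t ^ α * zetaTail α m := by
  rw [tailEnergy, zetaTail, ← tsum_mul_left]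
  refine (summable_tailEnergy hα m ht).tsum_le_tsum (fun k ↦ ?_)
    ((summable_zetaTail hα m).mul_left _)
  rw [div_mul_div_comm, mul_one, ← mul_pow]
  gcongr
  exact le_add_of_nonneg_left zero_le_one

end Splitting

section Saturation

/-- The function `x / (1 + x ^ α) ^ (1 / α)` on `[0, ∞)`, which increases from `0` to `1` and whose
derivative `(1 + x ^ α) ^ (-1 - 1 / α)` lies below `1 / (1 + x ^ α)`. Its increments bound the terms
of the lattice energy from below. -/
noncomputable def saturation (α : ℕ) (x : ℝ) : ℝ :=
  (x ^ α / (1 + x ^ α)) ^ (1 / α : ℝ)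

variable {α m : ℕ} {x t : ℝ}

lemma saturation_le_self (hα : α ≠ 0) (hx : 0 ≤ x) : saturation α x ≤ x := calc
  saturation α x ≤ (x ^ α) ^ (1 / α : ℝ) := by
    unfold saturation
    gcongr
    exact div_le_self (by positivity) (le_add_of_nonneg_right (by positivity))
  _ = x := by rw [one_div, Real.pow_rpow_inv_natCast hx hα]

lemma tendsto_saturation_atTop (hα : α ≠ 0) : Tendsto (saturation α) atTop (𝓝 1) := by
  have hinv : Tendsto (fun x : ℝ ↦ 1 - (1 + x ^ α)⁻¹) atTop (𝓝 (1 - 0)) :=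
    (tendsto_atTop_add_const_left _ 1 (tendsto_pow_atTop hα)).inv_tendsto_atTop.const_sub 1
  have hroot := hinv.rpow_const (p := 1 / (α : ℝ)) (by norm_num)
  rw [sub_zero, Real.one_rpow] at hroot
  refine hroot.congr' ?_
  filter_upwards [eventually_ge_atTop 0] with x hx
  rw [saturation]
  congr 1
  field_simp
  ring

lemma hasDerivAt_saturation (hα : α ≠ 0) (hx : 0 < x) :
    HasDerivAt (saturation α) (saturation α x / x * (1 / (1 + x ^ α))) x := by
  have hpow := hasDerivAt_pow α x
  have hbase := hpow.fun_div (hpow.const_add 1) (by positivity)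
  refine (hbase.rpow_const (p := 1 / (α : ℝ)) (.inl (by positivity))).congr_deriv ?_
  rw [Real.rpow_sub_one (by positivity), ← saturation]
  obtain ⟨g, rfl⟩ := Nat.exists_eq_succ_of_ne_zero hα
  rw [Nat.succ_eq_add_one, Nat.add_sub_cancel]
  field_simp
  ring

lemma saturation_add_sub_le (hα : α ≠ 0) (hx : 0 < x) (ht : 0 ≤ t) :
    saturation α (x + t) - saturation α x ≤ t / (1 + x ^ α) := by
  have hderiv (z : ℝ) (hz : z ∈ Ici x) := hasDerivAt_saturation hα (hx.trans_le hz)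
  have hbound (z : ℝ) (hz : z ∈ interior (Ici x)) : deriv (saturation α) z ≤ 1 / (1 + x ^ α) := by
    have hxz : x ≤ z := interior_subset hz
    have hz0 : 0 < z := hx.trans_le hxz
    rw [(hderiv z hxz).deriv]
    calc saturation α z / z * (1 / (1 + z ^ α)) ≤ 1 * (1 / (1 + x ^ α)) := by
          gcongr
          exact (div_le_one hz0).2 (saturation_le_self hα hz0.le)
      _ = 1 / (1 + x ^ α) := one_mul _
  have hmvt := (convex_Ici x).image_sub_le_mul_sub_of_deriv_le
    (fun z hz ↦ (hderiv z hz).continuousAt.continuousWithinAt)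
    (fun z hz ↦ (hderiv z (interior_subset hz)).differentiableAt.differentiableWithinAt)
    hbound x self_mem_Ici (x + t) (le_add_of_nonneg_right ht) (le_add_of_nonneg_right ht)
  rwa [add_sub_cancel_left, one_div_mul_eq_div] at hmvt

lemma one_sub_saturation_le_tailEnergy (hα : 1 < α) (hm : 0 < m) (ht : 0 < t) :
    1 - saturation α (t * m) ≤ tailEnergy α m t := by
  have htel (N : ℕ) : saturation α (t * (N + m : ℕ)) - saturation α (t * m) ≤ tailEnergy α m t := by
    have hstep (k : ℕ) : saturation α (t * (k + 1 + m : ℕ)) - saturation α (t * (k + m : ℕ)) ≤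
        t / (1 + (t * (k + m : ℕ)) ^ α) := by
      have hnext : t * ((k + 1 + m : ℕ) : ℝ) = t * (k + m : ℕ) + t := by
        push_cast
        ring
      rw [hnext]
      exact saturation_add_sub_le (by lia) (by positivity) ht.le
    calc saturation α (t * (N + m : ℕ)) - saturation α (t * m)
        = ∑ k ∈ Finset.range N,
            (saturation α (t * (k + 1 + m : ℕ)) - saturation α (t * (k + m : ℕ))) := by
          rw [Finset.sum_range_sub (fun k ↦ saturation α (t * (k + m : ℕ))), zero_add]
      _ ≤ ∑ k ∈ Finset.range N, t / (1 + (t * (k + m : ℕ)) ^ α) :=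
          Finset.sum_le_sum fun k _ ↦ hstep k
      _ ≤ tailEnergy α m t :=
          (summable_tailEnergy hα m ht).sum_le_tsum _ fun _ _ ↦ by positivity
  have hlim : Tendsto (fun N : ℕ ↦ t * ((N + m : ℕ) : ℝ)) atTop atTop :=
    (tendsto_natCast_atTop_atTop.comp (tendsto_add_atTop_nat m)).const_mul_atTop ht
  exact le_of_tendsto' (((tendsto_saturation_atTop (by lia)).comp hlim).sub_const _) htel

end Saturation

section Comparison

variable {α : ℕ} {t : ℝ}

lemma two_sub_le_latticeEnergy (hα : Even α) (hα1 : 1 < α) (ht : 0 < t) :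
    2 - t ≤ latticeEnergy α t := by
  have htail := one_sub_saturation_le_tailEnergy hα1 one_pos ht
  have hsat := saturation_le_self (α := α) (by lia) (mul_nonneg ht.le (Nat.cast_nonneg 1))
  rw [latticeEnergy_eq_self_add hα hα1 ht]
  rw [Nat.cast_one, mul_one] at htail hsat
  linarith

lemma centralEnergy_le_latticeEnergy (hα : Even α) (hα1 : 1 < α) (ht : 0 < t) :
    centralEnergy α t ≤ latticeEnergy α t := by
  rw [latticeEnergy_eq_centralEnergy_add hα hα1 ht]
  linarith [tailEnergy_nonneg α 2 ht.le]

-- `37 / 25` slightly exceeds the energy of `t = 4 / 3` for `α = 10`; `13 / 25` is `2 - 37 / 25`.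
lemma le_centralEnergy (hα : 4 ≤ α) (ht : 13 / 25 ≤ t) (ht1 : t ≤ 1) :
    37 / 25 ≤ centralEnergy α t := by
  have ht0 : 0 < t := by linarith
  have hpow : t ^ α ≤ t ^ 4 := pow_le_pow_of_le_one ht0.le ht1 hα
  have hchord : t ^ 4 ≤ 2 * t - 24 / 25 := by
    have hsq : t ^ 2 ≤ 38 / 25 * t - 13 / 25 := by nlinarith
    nlinarith
  calc 37 / 25 ≤ t * (1 + 2 / (1 + t ^ 4)) := by
        field_simp
        nlinarith
    _ ≤ centralEnergy α t := by
        unfold centralEnergy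
        gcongr

lemma le_latticeEnergy_of_le_one (hα : Even α) (hα4 : 4 ≤ α) (ht : 0 < t) (ht1 : t ≤ 1) :
    37 / 25 ≤ latticeEnergy α t := by
  have hα1 : 1 < α := by lia
  rcases le_total t (13 / 25) with hsmall | hlarge
  · linarith [two_sub_le_latticeEnergy hα hα1 ht]
  · exact (le_centralEnergy hα4 hlarge ht1).trans (centralEnergy_le_latticeEnergy hα hα1 ht)

lemma latticeEnergy_four_thirds_lt (hα : Even α) (hα10 : 10 ≤ α) :
    latticeEnergy α (4 / 3) < 37 / 25 := by
  have hpow : (177 / 10 : ℝ) ≤ (4 / 3) ^ α :=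
    le_trans (by norm_num) (pow_le_pow_right₀ (by norm_num : (1 : ℝ) ≤ 4 / 3) hα10)
  have hzeta : zetaTail α 2 ≤ 4 / 2 ^ 10 :=
    (zetaTail_two_le (by lia)).trans (by gcongr; norm_num)
  have hcentral : centralEnergy α (4 / 3) ≤ 4 / 3 * (1 + 2 / (1 + 177 / 10)) := by
    unfold centralEnergy
    gcongr
  have htail : tailEnergy α 2 (4 / 3) ≤ 4 / 3 / (177 / 10) * (4 / 2 ^ 10) :=
    (tailEnergy_le (by lia) two_pos (by norm_num)).trans (by gcongr; exact zetaTail_nonneg α 2)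
  rw [latticeEnergy_eq_centralEnergy_add hα (by lia) (by norm_num)]
  norm_num at hcentral htail ⊢
  linarith

end Comparison

section Minimizer

variable {α : ℕ} {s : ℝ}

lemma hasDerivAt_centralEnergy (hα : α ≠ 0) (hs : 0 ≤ s) :
    HasDerivAt (centralEnergy α)
      (((s ^ α) ^ 2 - 2 * (α - 2) * s ^ α + 3) / (1 + s ^ α) ^ 2) s := by
  have hinv := ((hasDerivAt_pow α s).const_add 1).fun_inv (by positivity)
  have hprod := (hasDerivAt_id s).mul ((hinv.const_mul 2).const_add 1)
  obtain ⟨g, rfl⟩ := Nat.exists_eq_succ_of_ne_zero hα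
  refine (hprod.congr_deriv ?_).congr_of_eventuallyEq (.of_forall fun t ↦ ?_)
  · simp only [id, Nat.succ_eq_add_one, Nat.add_sub_cancel, Nat.cast_add, Nat.cast_one]
    field_simp
    ring
  · simp [centralEnergy, div_eq_mul_inv]

lemma hasDerivAt_mul_one_div_pow_sub (hα : α ≠ 0) (hs : s ≠ 0) :
    HasDerivAt (fun t : ℝ ↦ t * (1 / t ^ α - 1 / s ^ α)) (-(α / s ^ α)) s := by
  have hinv := ((hasDerivAt_pow α s).fun_inv (by positivity)).sub_const (1 / s ^ α)
  obtain ⟨g, rfl⟩ := Nat.exists_eq_succ_of_ne_zero hα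
  simp only [one_div] at hinv ⊢
  refine ((hasDerivAt_id' s).mul hinv).congr_deriv ?_
  simp only [Nat.succ_eq_add_one, Nat.add_sub_cancel]
  field_simp
  ring

lemma one_le_of_isMinOn_latticeEnergy (hα : Even α) (hα10 : 10 ≤ α) (hs : 0 < s)
    (hmin : IsMinOn (latticeEnergy α) (Ioi 0) s) : 1 ≤ s := by
  by_contra! hs1
  have hle : latticeEnergy α s ≤ latticeEnergy α (4 / 3) := hmin (by norm_num : (0 : ℝ) < 4 / 3)
  linarith [le_latticeEnergy_of_le_one hα (by lia) hs hs1.le, latticeEnergy_four_thirds_lt hα hα10]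

lemma quadratic_nonneg_of_isMinOn_latticeEnergy (hα : Even α) (hα1 : 1 < α) (hs : 1 ≤ s)
    (hmin : IsMinOn (latticeEnergy α) (Ioi 0) s) :
    0 ≤ (s ^ α) ^ 2 - 2 * (α - 2) * s ^ α + 3 := by
  have hs0 : 0 < s := by linarith
  have hcentral : IsMinOn (centralEnergy α) (segment ℝ s (s + 1)) s := by
    intro t ht
    rw [segment_eq_Icc (by linarith)] at ht
    have ht0 : 0 < t := hs0.trans_le ht.1
    have htail := antitoneOn_tailEnergy hα1 two_pos hs (hs.trans ht.1) ht.1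
    have hle : latticeEnergy α s ≤ latticeEnergy α t := hmin ht0
    rw [latticeEnergy_eq_centralEnergy_add hα hα1 hs0,
      latticeEnergy_eq_centralEnergy_add hα hα1 ht0] at hle
    change centralEnergy α s ≤ centralEnergy α t
    linarith
  have hderiv := mul_nonneg_of_isMinOn_segment hcentral (hasDerivAt_centralEnergy (by lia) hs0.le)
  rw [add_sub_cancel_left, one_mul] at hderiv
  simpa using (le_div_iff₀ (by positivity)).1 hderiv

lemma quadratic_div_le_of_isMinOn_latticeEnergy (hα : Even α) (hα1 : 1 < α) (hs : 0 < s)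
    (hmin : IsMinOn (latticeEnergy α) (Ioi 0) s) :
    ((s ^ α) ^ 2 - 2 * (α - 2) * s ^ α + 3) / (1 + s ^ α) ^ 2 ≤
      2 * α * zetaTail α 2 / s ^ α := by
  let majorant : ℝ → ℝ := fun t ↦
    centralEnergy α t + 2 * zetaTail α 2 * (t * (1 / t ^ α - 1 / s ^ α))
  have hmaj : IsMinOn majorant (segment ℝ s (s / 2)) s := by
    intro t ht
    rw [segment_symm, segment_eq_Icc (by linarith)] at ht
    have ht0 : 0 < t := by linarith [ht.1]
    have htail := tailEnergy_le_add hα1 two_pos ht0 ht.2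
    have hle : latticeEnergy α s ≤ latticeEnergy α t := hmin ht0
    rw [latticeEnergy_eq_centralEnergy_add hα hα1 hs,
      latticeEnergy_eq_centralEnergy_add hα hα1 ht0] at hle
    change centralEnergy α s + 2 * zetaTail α 2 * (s * (1 / s ^ α - 1 / s ^ α)) ≤
      centralEnergy α t + 2 * zetaTail α 2 * (t * (1 / t ^ α - 1 / s ^ α))
    linarith
  have hderiv := mul_nonneg_of_isMinOn_segment hmaj ((hasDerivAt_centralEnergy (by lia) hs.le).add
    ((hasDerivAt_mul_one_div_pow_sub (by lia) hs.ne').const_mul (2 * zetaTail α 2)))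
  have hsign := nonpos_of_mul_nonneg_right hderiv (by linarith : s / 2 - s < 0)
  linear_combination hsign

lemma two_mul_sub_five_le_pow_of_isMinOn_latticeEnergy (hα : Even α) (hα6 : 6 ≤ α) (hs : 1 ≤ s)
    (hmin : IsMinOn (latticeEnergy α) (Ioi 0) s) : 2 * (α : ℝ) - 5 ≤ s ^ α := by
  have hquad := quadratic_nonneg_of_isMinOn_latticeEnergy hα (by lia) hs hmin
  have hα6' : (6 : ℝ) ≤ α := by exact_mod_cast hα6
  have hy : 1 ≤ s ^ α := one_le_pow₀ hs
  by_contra! hlt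
  have hneg : (s ^ α - 1) * (s ^ α - (2 * α - 5)) ≤ 0 :=
    mul_nonpos_of_nonneg_of_nonpos (by linarith) (by linarith)
  linarith

lemma pow_le_two_mul_sub_three_of_isMinOn_latticeEnergy (hα : Even α) (hα6 : 6 ≤ α) (hs : 0 < s)
    (hmin : IsMinOn (latticeEnergy α) (Ioi 0) s) : s ^ α ≤ 2 * (α : ℝ) - 3 := by
  have hquad := quadratic_div_le_of_isMinOn_latticeEnergy hα (by lia) hs hmin
  have hα6' : (6 : ℝ) ≤ α := by exact_mod_cast hα6
  by_contra! hlt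
  set y := s ^ α
  have hy : 1 < y := by linarith
  have htail : 2 * α * zetaTail α 2 / y ≤ 1 / y := by
    gcongr
    exact two_mul_mul_zetaTail_two_le_one hα6
  have hcross := hquad.trans htail
  rw [div_le_div_iff₀ (by positivity) (by positivity)] at hcross
  have hfactor : 0 ≤ y * (y - (2 * α - 3)) := mul_nonneg (by positivity) (by linarith)
  have hquad_ge : (y + 3) * y ≤ (y ^ 2 - 2 * (α - 2) * y + 3) * y := by
    gcongr
    linarith
  have hexcess : (1 + y) ^ 2 < (y + 3) * y := by linear_combination hy
  rw [one_mul] at hcross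
  exact (hexcess.trans_le hquad_ge).not_ge hcross

end Minimizer

lemma half_mul_le_mul_div_one_add_sq {a y : ℝ} (hlo : 2 * a - 5 ≤ y) (hup : y ≤ 2 * a - 3)
    (ha : 5 / 2 ≤ a) : 1 / 2 * (1 - 1 / (2 * a - 4)) ≤ a * y / (1 + y) ^ 2 := by
  have hy : 0 < 1 + y := by linarith
  have hhalf : 1 / 2 ≤ a / (1 + y) := by
    rw [div_le_div_iff₀ two_pos hy]
    linarith
  have hrecip : 1 / (1 + y) ≤ 1 / (2 * a - 4) :=
    one_div_le_one_div_of_le (by linarith) (by linarith)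
  have hrecip_one : 1 / (1 + y) ≤ 1 := (div_le_one hy).2 (by linarith)
  calc 1 / 2 * (1 - 1 / (2 * a - 4)) ≤ 1 / 2 * (1 - 1 / (1 + y)) := by linarith
    _ ≤ a / (1 + y) * (1 - 1 / (1 + y)) :=
      mul_le_mul_of_nonneg_right hhalf (by linarith)
    _ = a * y / (1 + y) ^ 2 := by
      field_simp
      ring

lemma mul_div_one_add_sq_le {a y : ℝ} (hlo : 2 * a - 5 ≤ y) (ha : 5 / 2 ≤ a) :
    a * y / (1 + y) ^ 2 ≤ a / (2 * a - 4) := by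
  have hy : 0 ≤ y := by linarith
  calc a * y / (1 + y) ^ 2 ≤ a * (1 + y) / (1 + y) ^ 2 := by gcongr; linarith
    _ = a / (1 + y) := by field_simp
    _ ≤ a / (2 * a - 4) := by gcongr <;> linarith

theorem statement11_general (α : ℕ) (hα : Even α) (hα10 : 10 ≤ α) (s : ℝ) (hs : 0 < s)
    (hmin : ∀ t : ℝ, 0 < t → latticeEnergy α s ≤ latticeEnergy α t)
    (F : ℝ → ℝ) (hF : ∀ x, F x = 1 / (1 + s ^ α * x ^ α)) :
    (2 * (α : ℝ) - 5 ≤ s ^ α ∧ s ^ α ≤ 2 * (α : ℝ) - 3) ∧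
    (1 / (2 * (α : ℝ) - 2) ≤ F 1 ∧ F 1 ≤ 1 / (2 * (α : ℝ) - 4)) ∧
    ((1 / 2) * (1 - 1 / (2 * (α : ℝ) - 4)) ≤ -(deriv F 1) ∧
      -(deriv F 1) ≤ (α : ℝ) / (2 * (α : ℝ) - 4)) := by
  have hα10' : (10 : ℝ) ≤ α := by exact_mod_cast hα10
  have hs1 : 1 ≤ s := one_le_of_isMinOn_latticeEnergy hα hα10 hs hmin
  have hlo := two_mul_sub_five_le_pow_of_isMinOn_latticeEnergy hα (by lia) hs1 hmin
  have hup := pow_le_two_mul_sub_three_of_isMinOn_latticeEnergy hα (by lia) hs hmin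
  have hF1 : F 1 = 1 / (1 + s ^ α) := by rw [hF, one_pow, mul_one]
  have hderiv : -(deriv F 1) = α * s ^ α / (1 + s ^ α) ^ 2 := by
    rw [funext hF, (hasDerivAt_one_div_one_add_mul_pow α (by positivity)).deriv]
    simp only [one_pow, mul_one, neg_div, neg_neg]
  rw [hF1, hderiv]
  refine ⟨⟨hlo, hup⟩, ⟨?_, ?_⟩, half_mul_le_mul_div_one_add_sq hlo hup (by linarith),
    mul_div_one_add_sq_le hlo (by linarith)⟩
  · exact one_div_le_one_div_of_le (by positivity) (by linarith)
  · exact one_div_le_one_div_of_le (by linarith) (by linarith)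

/-- Estimates on `s_α^α`, `F_α(1)` and `F_α′(1)` for `α ≥ 12`, where `s_α > 0` minimizes
the lattice energy and `F_α(x) = 1/(1 + s_α^α x^α)`. -/
theorem statement11 (α : ℕ) (hα : Even α) (hα12 : 12 ≤ α) (s : ℝ) (hs : 0 < s)
    (hmin : ∀ t : ℝ, 0 < t → latticeEnergy α s ≤ latticeEnergy α t)
    (F : ℝ → ℝ) (hF : ∀ x, F x = 1 / (1 + s ^ α * x ^ α)) :
    (2 * (α : ℝ) - 5 ≤ s ^ α ∧ s ^ α ≤ 2 * (α : ℝ) - 3) ∧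
    (1 / (2 * (α : ℝ) - 2) ≤ F 1 ∧ F 1 ≤ 1 / (2 * (α : ℝ) - 4)) ∧
    ((1 / 2) * (1 - 1 / (2 * (α : ℝ) - 4)) ≤ -(deriv F 1) ∧
      -(deriv F 1) ≤ (α : ℝ) / (2 * (α : ℝ) - 4)) :=
  statement11_general α hα (by lia) s hs hmin F hF
end
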